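/- There is no semisimple tensor category C containing pairwise non-isomorphic Fibonacci objects a, b, c satisfying a⊗b ≅ b⊗a, b⊗c⊗b ≅ c⊗b⊗c, a⊗c⊗a ≅ c⊗a⊗c, for which there exists n ≥ 1 such that A_n ≅ B_n and every cyclic word in a, b, c of length at most n is simple. -/

import Mathlib

/-! In the monoid of isomorphism classes of objects the hypotheses say that `a` and `b` commute
while `c` satisfies a braid relation with each of them: these are the relations of the braid group
of type `A₃`. There are two ingredients.

* A Fibonacci object `τ` is left cancellable (`IsFibonacci.cancel`). An isomorphism
  `τ ⊗ X ≅ τ ⊗ Y` yields `(τ ⊗ X) ⊞ X ≅ (τ ⊗ Y) ⊞ Y` on tensoring once more with `τ`, so it is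
  enough to cancel from biproducts. As simplicity is phrased through monomorphisms and `C` need not
  have kernels, Schur's lemma is not available; instead every object `Z` is shown to be cancellable
  by finite-dimensionality of the Hom-spaces (`cancels_of_finiteDimensional`). The functor
  `Hom(X ⊞ Y, -)` takes the question to modules of finite length, where Fitting's lemma reduces it
  to modules all of whose endomorphisms are invertible or nilpotent, and these are treated by
  Gaussian elimination (`cancels_of_isUnit_or_isNilpotent`).

* For `n ≤ 5`, cancellation turns `A_n ≅ B_n` into an isomorphism between two of `a`, `b`, `c`
  (`monoid_words`). For `n ≥ 6` the word `B_6` has to be simple, but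
  `bcabca ≅ bcbaca ≅ cbc·cac = cb(cc)ac`, and `c ⊗ c ≅ 𝟙 ⊞ c` makes it the biproduct of the two
  nonzero objects `cbcac` and `cbac`. -/


open CategoryTheory CategoryTheory.Limits CategoryTheory.MonoidalCategory

universe v u

attribute [local instance] CategoryTheory.Limits.hasBinaryBiproducts_of_finite_biproducts

/-- Every object decomposes as a finite biproduct of simple objects. -/
def IsSemisimple (C : Type u) [Category.{v} C] [Preadditive C]
    [HasFiniteBiproducts C] : Prop :=
  ∀ X : C, ∃ (n : ℕ) (f : Fin n → C), (∀ i, Simple (f i)) ∧ Nonempty (X ≅ ⨁ f)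

/-- Finitely many isomorphism classes of simple objects. -/
def FiniteRank (C : Type u) [Category.{v} C] [Preadditive C] : Prop :=
  ∃ (n : ℕ) (S : Fin n → C), ∀ X : C, Simple X → ∃ i, Nonempty (X ≅ S i)

/-- A Fibonacci object: simple, self-dual, with `τ ⊗ τ ≅ 𝟙 ⊞ τ`. -/
def IsFibonacci {C : Type u} [Category.{v} C] [MonoidalCategory C] [Preadditive C]
    [HasFiniteBiproducts C] [RigidCategory C] (τ : C) : Prop :=
  Simple τ ∧ Nonempty (τ ≅ τᘁ) ∧ Nonempty (τ ⊗ τ ≅ 𝟙_ C ⊞ τ)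

/-- The cyclic word of length `n` starting at `a` and following the cycle
`a → b → c → a`; `cyclicWord 0 a b c` is the tensor unit. -/
def cyclicWord {C : Type u} [Category.{v} C] [MonoidalCategory C] :
    ℕ → C → C → C → C
  | 0, _, _, _ => 𝟙_ C
  | n + 1, a, b, c => a ⊗ cyclicWord n b c a

/-- All six cyclic words of length `k` in the letters `a, b, c` are simple. -/
def AllCyclicWordsSimple {C : Type u} [Category.{v} C] [MonoidalCategory C]
    [Preadditive C] (a b c : C) (k : ℕ) : Prop :=
  Simple (cyclicWord k a b c) ∧ Simple (cyclicWord k b c a) ∧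
    Simple (cyclicWord k c a b) ∧ Simple (cyclicWord k a c b) ∧
    Simple (cyclicWord k b a c) ∧ Simple (cyclicWord k c b a)

section Cancellation

variable {D : Type*} [Category* D] [Preadditive D] [HasBinaryBiproducts D]

/-- The object `Z` is cancellable from biproducts. -/
def Cancels (Z : D) : Prop :=
  ∀ ⦃X Y : D⦄, Nonempty (Z ⊞ X ≅ Z ⊞ Y) → Nonempty (X ≅ Y)

lemma Cancels.of_iso {Z Z' : D} (e : Z ≅ Z') (h : Cancels Z) : Cancels Z' := by
  rintro X Y ⟨f⟩
  exact h ⟨biprod.mapIso e (Iso.refl X) ≪≫ f ≪≫ biprod.mapIso e.symm (Iso.refl Y)⟩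

lemma Cancels.biprod {Z Z' : D} (h : Cancels Z) (h' : Cancels Z') : Cancels (Z ⊞ Z') := by
  rintro X Y ⟨f⟩
  exact h' (h ⟨(biprod.associator Z Z' X).symm ≪≫ f ≪≫ biprod.associator Z Z' Y⟩)

/-- Local case of cancellation: after composing with a unipotent automorphism, the `Z ⟶ Z` entry
of the given isomorphism becomes invertible, and Gaussian elimination applies. -/
lemma cancels_of_isUnit_or_isNilpotent {Z : D}
    (h : ∀ s : End Z, IsUnit s ∨ IsNilpotent s) : Cancels Z := by
  rintro X Y ⟨f⟩
  let s : End Z := biprod.inl ≫ f.hom ≫ biprod.fst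
  let s' : End Z := biprod.inl ≫ f.inv ≫ biprod.fst
  let g : Z ⟶ X := biprod.inl ≫ f.inv ≫ biprod.snd
  let r : X ⟶ Z := biprod.inr ≫ f.hom ≫ biprod.fst
  let t : End Z := g ≫ r
  have hst : s * s' + t = 1 := by
    change (biprod.inl ≫ f.inv ≫ biprod.fst) ≫ (biprod.inl ≫ f.hom ≫ biprod.fst) +
      (biprod.inl ≫ f.inv ≫ biprod.snd) ≫ (biprod.inr ≫ f.hom ≫ biprod.fst) = 𝟙 Z
    have := congrArg (fun k => (biprod.inl ≫ f.inv) ≫ k ≫ f.hom ≫ (biprod.fst : Z ⊞ Y ⟶ Z))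
      (biprod.total (X := Z) (Y := X))
    simpa only [Preadditive.add_comp, Preadditive.comp_add, Category.assoc, Category.id_comp,
      Iso.inv_hom_id_assoc, biprod.inl_fst] using this
  rcases h s with hs | hs
  · have : IsIso (biprod.inl ≫ f.hom ≫ biprod.fst) := (isUnit_iff_isIso s).1 hs
    exact ⟨Biprod.isoElim f⟩
  · have ht : IsUnit t := by
      rcases h (s * s') with h1 | h1
      · -- a nilpotent element with a right inverse only exists in the zero ring
        obtain ⟨w, hw⟩ := h1.exists_right_inv
        obtain ⟨n, hn⟩ := hs
        have h2 : s ^ n * (s' * w) ^ n = 1 := pow_mul_pow_eq_one n (by rw [← mul_assoc, hw])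
        rw [hn, zero_mul] at h2
        have := subsingleton_of_zero_eq_one h2
        exact isUnit_of_subsingleton t
      · rw [← sub_eq_iff_eq_add'.2 hst.symm]
        exact h1.isUnit_one_sub
    obtain ⟨u, hu⟩ := ht.exists_right_inv
    let f' : Z ⊞ X ≅ Z ⊞ Y := Biprod.unipotentUpper ((u : Z ⟶ Z) ≫ g) ≪≫ f
    have hf' : biprod.inl ≫ f'.hom ≫ biprod.fst = (s + 1 : End Z) := by
      have : (u : Z ⟶ Z) ≫ g ≫ r = 𝟙 Z := hu
      have h2 : (s + 1 : End Z) = (biprod.inl ≫ f.hom ≫ biprod.fst : Z ⟶ Z) +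
          (u : Z ⟶ Z) ≫ g ≫ r := by rw [this]; rfl
      rw [h2]
      simp [f', Biprod.unipotentUpper, Biprod.ofComponents, r]
    have : IsIso (biprod.inl ≫ f'.hom ≫ biprod.fst) := by
      rw [hf']
      exact (isUnit_iff_isIso (s + 1)).1 hs.isUnit_add_one
    exact ⟨Biprod.isoElim f'⟩

end Cancellation

section Modules

variable {R : Type v} [Ring R] {M : Type v} [AddCommGroup M] [Module R M]
  [IsArtinian R M] [IsNoetherian R M]

/-- Induction on the submodule `N`: if some endomorphism is neither invertible nor nilpotent, its
Fitting decomposition splits `N` into two strictly smaller submodules. -/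
lemma cancels_submodule (N : Submodule R M) : Cancels (ModuleCat.of R N) := by
  induction N using WellFoundedLT.induction with
  | ind N ih =>
    by_cases h : ∀ s : Module.End R N, IsUnit s ∨ IsNilpotent s
    · refine cancels_of_isUnit_or_isNilpotent fun s => ?_
      let e := ModuleCat.endRingEquiv (ModuleCat.of R N)
      rcases h (e s) with h | h
      · exact Or.inl ((isUnit_map_iff e s).1 h)
      · exact Or.inr ((IsNilpotent.map_iff e.injective).1 h)
    · push Not at h
      obtain ⟨s, hs, hs'⟩ := h
      obtain ⟨k, hk, hk1⟩ := (s.eventually_isCompl_ker_pow_range_pow.and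
        (Filter.eventually_ge_atTop 1)).exists
      have key : ∀ P : Submodule R N, P ≠ ⊤ → Cancels (ModuleCat.of R P) := by
        intro P hP
        refine (ih (P.map N.subtype) ?_).of_iso
          (P.equivMapOfInjective N.subtype N.injective_subtype).toModuleIso.symm
        refine lt_of_le_of_ne (Submodule.map_subtype_le N P) fun hPN => hP ?_
        apply Submodule.map_injective_of_injective N.injective_subtype
        rw [hPN, Submodule.map_subtype_top]
      have h1 : LinearMap.ker (s ^ k) ≠ ⊤ := fun h0 =>
        hs' ⟨k, LinearMap.ker_eq_top.1 h0⟩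
      have h2 : LinearMap.range (s ^ k) ≠ ⊤ := fun h0 => by
        have : LinearMap.ker (s ^ k) = ⊥ := by
          have := hk.inf_eq_bot
          rwa [h0, inf_top_eq] at this
        have h3 : IsUnit (s ^ k) := (Module.End.isUnit_iff _).2
          ⟨LinearMap.ker_eq_bot.1 this, LinearMap.range_eq_top.1 h0⟩
        exact hs ((isUnit_pow_iff (by omega)).1 h3)
      exact ((key _ h1).biprod (key _ h2)).of_iso
        (ModuleCat.biprodIsoProd _ _ ≪≫ (Submodule.prodEquivOfIsCompl _ _ hk).toModuleIso)

lemma cancels_module : Cancels (ModuleCat.of R M) :=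
  (cancels_submodule (⊤ : Submodule R M)).of_iso Submodule.topEquiv.toModuleIso

end Modules

section HomFinite

variable {C : Type u} [Category.{v} C] [Preadditive C] [HasBinaryBiproducts C]

/-- The functor `Hom(X ⊞ Y, -)` to modules over `End (X ⊞ Y)` reflects isomorphy of
`X` and `Y`, since every linear map `Hom(X ⊞ Y, X) → Hom(X ⊞ Y, Y)` is composition with a
morphism `X ⟶ Y`. -/
lemma nonempty_iso_of_coyoneda {X Y : C}
    (φ : (preadditiveCoyonedaObj (X ⊞ Y)).obj X ≅ (preadditiveCoyonedaObj (X ⊞ Y)).obj Y) :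
    Nonempty (X ≅ Y) := by
  let F : (X ⊞ Y ⟶ X) → (X ⊞ Y ⟶ Y) := φ.hom.hom
  let G : (X ⊞ Y ⟶ Y) → (X ⊞ Y ⟶ X) := φ.inv.hom
  have hF : ∀ (e : X ⊞ Y ⟶ X ⊞ Y) h, F (e ≫ h) = e ≫ F h := fun e h =>
    φ.hom.hom.map_smul (MulOpposite.op (show End (X ⊞ Y) from e)) h
  have hG : ∀ (e : X ⊞ Y ⟶ X ⊞ Y) h, G (e ≫ h) = e ≫ G h := fun e h =>
    φ.inv.hom.map_smul (MulOpposite.op (show End (X ⊞ Y) from e)) h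
  have hGF : ∀ h, G (F h) = h := fun h => ConcreteCategory.congr_hom φ.hom_inv_id h
  have hFG : ∀ h, F (G h) = h := fun h => ConcreteCategory.congr_hom φ.inv_hom_id h
  refine ⟨⟨biprod.inl ≫ F biprod.fst, biprod.inr ≫ G biprod.snd, ?_, ?_⟩⟩
  · have := hG (F biprod.fst ≫ biprod.inr) biprod.snd
    simp only [Category.assoc, biprod.inr_snd, Category.comp_id, hGF] at this
    simp [← this]
  · have := hF (G biprod.snd ≫ biprod.inl) biprod.fst
    simp only [Category.assoc, biprod.inl_fst, Category.comp_id, hFG] at this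
    simp [← this]

/-- Every object of a category with finite-dimensional Hom-spaces is cancellable. -/
lemma cancels_of_finiteDimensional [Linear ℂ C]
    (hfd : ∀ X Y : C, FiniteDimensional ℂ (X ⟶ Y)) (Z : C) : Cancels Z := by
  rintro X Y ⟨f⟩
  let W := X ⊞ Y
  let F := preadditiveCoyonedaObj W
  have := hfd W Z
  have : IsScalarTower ℂ (End W)ᵐᵒᵖ (W ⟶ Z) := ⟨fun r e h => by
    change (r • e.unop : W ⟶ W) ≫ h = r • ((e.unop : W ⟶ W) ≫ h)
    exact Linear.smul_comp _ _ _ _ _ _⟩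
  have : IsArtinian (End W)ᵐᵒᵖ (W ⟶ Z) := isArtinian_of_tower ℂ inferInstance
  have : IsNoetherian (End W)ᵐᵒᵖ (W ⟶ Z) := isNoetherian_of_tower ℂ inferInstance
  have hZ : Cancels (F.obj Z) := cancels_module (R := (End W)ᵐᵒᵖ) (M := (W ⟶ Z))
  have : PreservesBinaryBiproducts F := preservesBinaryBiproducts_of_preservesBiproducts F
  obtain ⟨φ⟩ := hZ ⟨(F.mapBiprod Z X).symm ≪≫ F.mapIso f ≪≫ F.mapBiprod Z Y⟩
  exact nonempty_iso_of_coyoneda φ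

end HomFinite

section Monoidal

variable {C : Type u} [Category.{v} C] [MonoidalCategory C] [Preadditive C]
  [HasFiniteBiproducts C] [RigidCategory C]

lemma tensor_biprod (Z X Y : C) : Nonempty (Z ⊗ (X ⊞ Y) ≅ (Z ⊗ X) ⊞ (Z ⊗ Y)) := by
  have : (tensorLeft Z).IsLeftAdjoint := (tensorLeftAdjunction (ᘁZ) Z).isLeftAdjoint
  have := preservesBinaryBiproduct_of_preservesBinaryCoproduct (X := X) (Y := Y) (tensorLeft Z)
  exact ⟨(tensorLeft Z).mapBiprod X Y⟩

lemma biprod_tensor (X Y Z : C) : Nonempty ((X ⊞ Y) ⊗ Z ≅ (X ⊗ Z) ⊞ (Y ⊗ Z)) := by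
  have : (tensorRight Z).IsLeftAdjoint := (tensorRightAdjunction Z (Zᘁ)).isLeftAdjoint
  have := preservesBinaryBiproduct_of_preservesBinaryCoproduct (X := X) (Y := Y) (tensorRight Z)
  exact ⟨(tensorRight Z).mapBiprod X Y⟩

lemma IsFibonacci.tensor_tensor {τ : C} (h : IsFibonacci τ) (X : C) :
    Nonempty (τ ⊗ τ ⊗ X ≅ (τ ⊗ X) ⊞ X) := by
  obtain ⟨-, -, ⟨e⟩⟩ := h
  obtain ⟨d⟩ := biprod_tensor (𝟙_ C) τ X
  exact ⟨(α_ τ τ X).symm ≪≫ whiskerRightIso e X ≪≫ d ≪≫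
    biprod.mapIso (λ_ X) (Iso.refl _) ≪≫ biprod.braiding _ _⟩

/-- Tensoring with a Fibonacci object reflects isomorphy: `τ ⊗ X ≅ τ ⊗ Y` gives
`(τ ⊗ X) ⊞ X ≅ (τ ⊗ Y) ⊞ Y`, where the first summands cancel. -/
lemma IsFibonacci.cancel [Linear ℂ C] (hfd : ∀ X Y : C, FiniteDimensional ℂ (X ⟶ Y))
    {τ : C} (h : IsFibonacci τ) {X Y : C} (e : τ ⊗ X ≅ τ ⊗ Y) : Nonempty (X ≅ Y) := by
  obtain ⟨p⟩ := h.tensor_tensor X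
  obtain ⟨q⟩ := h.tensor_tensor Y
  exact cancels_of_finiteDimensional hfd (τ ⊗ X)
    ⟨p.symm ≪≫ whiskerLeftIso τ e ≪≫ q ≪≫ biprod.mapIso e.symm (Iso.refl Y)⟩

lemma IsFibonacci.isZero_of_tensor {τ : C} (h : IsFibonacci τ) {X : C} (hX : IsZero (τ ⊗ X)) :
    IsZero X := by
  obtain ⟨p⟩ := h.tensor_tensor X
  have : (tensorLeft τ).IsLeftAdjoint := (tensorLeftAdjunction (ᘁτ) τ).isLeftAdjoint
  have h0 : IsZero ((τ ⊗ X) ⊞ X) := ((tensorLeft τ).map_isZero hX).of_iso p.symm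
  rw [IsZero.iff_id_eq_zero] at h0 ⊢
  rw [← biprod.inr_snd (X := τ ⊗ X), ← Category.id_comp biprod.snd, h0, zero_comp, comp_zero]

end Monoidal

/-- The coincidences of cyclic words of length 2 to 5 are excluded in any monoid satisfying the
three relations in which `A`, `B`, `K` are left cancellable. In each case moving `B` to the front
with `A * B = B * A` and cancelling common prefixes ends in `A = K` or `B = K`. -/
lemma monoid_words {M : Type*} [Monoid M] {A B K : M}
    (cA : ∀ x y, A * x = A * y → x = y) (cB : ∀ x y, B * x = B * y → x = y)
    (cK : ∀ x y, K * x = K * y → x = y)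
    (hBK : B ≠ K) (hAK : A ≠ K)
    (r₁ : A * B = B * A) (r₂ : B * (K * B) = K * (B * K)) (r₃ : A * (K * A) = K * (A * K)) :
    A * B ≠ B * K ∧ A * (B * K) ≠ B * (K * A) ∧ A * (B * (K * A)) ≠ B * (K * (A * B)) ∧
      A * (B * (K * (A * B))) ≠ B * (K * (A * (B * K))) := by
  have r₁' : ∀ x, A * (B * x) = B * (A * x) := fun x => by rw [← mul_assoc, r₁, mul_assoc]
  have r₃' : ∀ x, A * (K * (A * x)) = K * (A * (K * x)) := fun x => by
    simpa only [mul_assoc] using congrArg (· * x) r₃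
  refine ⟨fun h => ?_, fun h => ?_, fun h => ?_, fun h => ?_⟩
  · rw [r₁] at h
    exact hAK (cB _ _ h)
  · rw [r₁'] at h
    have h1 : A * K = K * A := cB _ _ h
    rw [← h1] at r₃
    have h2 : A * (A * K) = A * (K * K) := by rw [r₃, ← mul_assoc, ← h1, mul_assoc]
    exact hAK (cK _ _ (by rw [← h1]; exact cA _ _ h2))
  · rw [r₁'] at h
    have h1 := cB _ _ h
    rw [r₃, r₁] at h1
    have h2 := cK _ _ h1
    rw [← r₁] at h2
    exact hBK (cA _ _ h2).symm
  · rw [r₁'] at h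
    have h1 := cB _ _ h
    rw [r₃'] at h1
    have h2 := cA _ _ (cK _ _ h1)
    have h3 : B * (B * K) = B * (K * K) := by
      rw [← h2, r₂, ← mul_assoc, h2, mul_assoc]
    have h4 := cB _ _ h3
    rw [← h2] at h4
    exact hBK (cK _ _ h4)

/-- Case 2: only `a` and `b` commute. -/
theorem no_quotient_ab_commute (C : Type u) [Category.{v} C] [MonoidalCategory C]
    [Preadditive C] [Linear ℂ C] [HasFiniteBiproducts C] [RigidCategory C]
    [Simple (𝟙_ C)]
    (hfd : ∀ X Y : C, FiniteDimensional ℂ (X ⟶ Y))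
    (hss : IsSemisimple C)
    (a b c : C) (ha : IsFibonacci a) (hb : IsFibonacci b) (hc : IsFibonacci c)
    (hab : ¬ Nonempty (a ≅ b)) (hbc : ¬ Nonempty (b ≅ c)) (hac : ¬ Nonempty (a ≅ c))
    (hrel₁ : Nonempty (a ⊗ b ≅ b ⊗ a))
    (hrel₂ : Nonempty (b ⊗ c ⊗ b ≅ c ⊗ b ⊗ c))
    (hrel₃ : Nonempty (a ⊗ c ⊗ a ≅ c ⊗ a ⊗ c))
    (hn : ∃ n : ℕ, 1 ≤ n ∧
      Nonempty (cyclicWord n a b c ≅ cyclicWord n b c a) ∧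
      ∀ k : ℕ, 1 ≤ k → k ≤ n → AllCyclicWordsSimple a b c k) :
    False := by
  obtain ⟨n, hn1, ⟨e⟩, hsimple⟩ := hn
  obtain ⟨r₁⟩ := hrel₁
  obtain ⟨r₂⟩ := hrel₂
  obtain ⟨r₃⟩ := hrel₃
  have cancel : ∀ {τ : C}, IsFibonacci τ → ∀ x y : Skeleton C,
      toSkeleton τ * x = toSkeleton τ * y → x = y := by
    intro τ hτ x y
    induction x using Quotient.inductionOn with | _ X
    induction y using Quotient.inductionOn with | _ Y
    intro h
    rw [← Skeleton.toSkeleton_tensorObj, ← Skeleton.toSkeleton_tensorObj,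
      toSkeleton_eq_toSkeleton_iff] at h
    exact toSkeleton_eq_toSkeleton_iff.2 (hτ.cancel hfd h.some)
  have hne : ∀ {X Y : C}, ¬ Nonempty (X ≅ Y) → toSkeleton X ≠ toSkeleton Y :=
    fun h h' => h (toSkeleton_eq_toSkeleton_iff.1 h')
  have R₁ := congr_toSkeleton_of_iso r₁
  have R₂ := congr_toSkeleton_of_iso r₂
  have R₃ := congr_toSkeleton_of_iso r₃
  simp only [Skeleton.toSkeleton_tensorObj] at R₁ R₂ R₃
  obtain ⟨w₂, w₃, w₄, w₅⟩ := monoid_words (cancel ha) (cancel hb) (cancel hc) (hne hbc) (hne hac)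
    R₁ R₂ R₃
  have E := congr_toSkeleton_of_iso e
  obtain hn6 | hn6 := lt_or_ge n 6
  · interval_cases n <;>
      simp only [cyclicWord, Skeleton.toSkeleton_tensorObj, ← Skeleton.one_eq, mul_one] at E
    · exact hne hab E
    · exact w₂ E
    · exact w₃ E
    · exact w₄ E
    · exact w₅ E
  · -- `bcabca = bcbaca = cbccac` in the skeleton monoid, and `cc` splits off a summand
    have hs : Simple (cyclicWord 6 b c a) := (hsimple 6 (by norm_num) hn6).2.1
    have hW : toSkeleton (cyclicWord 6 b c a) = toSkeleton (c ⊗ b ⊗ c ⊗ c ⊗ a ⊗ c) := by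
      simp only [cyclicWord, Skeleton.toSkeleton_tensorObj, ← Skeleton.one_eq, mul_one]
      rw [← mul_assoc (toSkeleton a) (toSkeleton b), R₁, mul_assoc, R₃]
      simpa only [mul_assoc] using
        congrArg (· * (toSkeleton c * (toSkeleton a * toSkeleton c))) R₂
    obtain ⟨i⟩ := toSkeleton_eq_toSkeleton_iff.1 hW
    obtain ⟨j⟩ := hc.tensor_tensor (a ⊗ c)
    obtain ⟨k⟩ := tensor_biprod b (c ⊗ a ⊗ c) (a ⊗ c)
    obtain ⟨l⟩ := tensor_biprod c (b ⊗ c ⊗ a ⊗ c) (b ⊗ a ⊗ c)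
    have hc0 : ¬ IsZero c := have := hc.1; Simple.not_isZero c
    have hac0 : ¬ IsZero (a ⊗ c) := fun h => hc0 (ha.isZero_of_tensor h)
    rcases (indecomposable_of_simple (cyclicWord 6 b c a)).2 _ _
      (i ≪≫ whiskerLeftIso c (whiskerLeftIso b j ≪≫ k) ≪≫ l) with h | h
    · exact hac0 (hc.isZero_of_tensor (hb.isZero_of_tensor (hc.isZero_of_tensor h)))
    · exact hac0 (hb.isZero_of_tensor (hc.isZero_of_tensor h))
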